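/- Let m ≥ 1 and let w, w' ∈ ℤ^m \ {0} be inequivalent (k w ≠ l w' for all nonzero integers k, l). Define ℋ'(w) to be the closed linear span in L²(J^m) of the mean-zero functions x ↦ φ(w·x) with φ : ℝ → ℂ continuous, 2-periodic, and ∫_{−1}^1 φ = 0; define ℋ'(w') analogously. Then the closed subspaces ℋ'(w) and ℋ'(w') of L²(J^m) are orthogonal: ⟨F, F'⟩_{L²(J^m)} = 0 for every F ∈ ℋ'(w) and F' ∈ ℋ'(w'). -/

import Mathlib

open MeasureTheory

/-- Lebesgue measure restricted to the cube `J^m = [-1,1]^m`. -/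
noncomputable def cubeMeasure (m : ℕ) : Measure (Fin m → ℝ) :=
  volume.restrict (Set.Icc (-1 : Fin m → ℝ) 1)

/-- `ℋ'(w)`: the closed linear span in `L²(J^m)` of the ridge functions `x ↦ φ(w·x)`
with `φ : ℝ → ℂ` continuous, `2`-periodic and of mean zero over `[-1,1]`. -/
noncomputable def ridgeSpace' (m : ℕ) (w : Fin m → ℤ) :
    Submodule ℂ (Lp ℂ 2 (cubeMeasure m)) :=
  (Submodule.span ℂ
    {F : Lp ℂ 2 (cubeMeasure m) | ∃ φ : ℝ → ℂ, Continuous φ ∧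
      (∀ s : ℝ, φ (s + 2) = φ s) ∧ (∫ s in (-1 : ℝ)..1, φ s) = 0 ∧
      ⇑F =ᵐ[cubeMeasure m] fun x => φ (∑ i, (w i : ℝ) * x i)}).topologicalClosure

/-!
If `w` and `w'` are linearly independent over `ℤ`, then `y ↦ (w · y, w' · y)` is a surjective
homomorphism from the torus `(ℝ/2ℤ)^m` onto `(ℝ/2ℤ)²`, since circles are divisible. It therefore
carries normalized Haar measure to normalized Haar measure: for `x` uniform on the cube, `w · x`
and `w' · x` are independent and uniform modulo `2`. Hence the average of `φ(w · x) ψ(w' · x)` is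
the product of the averages of `φ` and `ψ`, which vanishes as soon as one of them has mean zero.
-/

section Torus

variable {ι κ A : Type*} [Fintype ι] [AddCommGroup A]

/-- The homomorphism `A^ι → A^κ` given by an integer matrix with rows `w k`; for `A` a circle it
is the map of tori whose components are the characters `y ↦ w k · y`. -/
def intMatrixHom (w : κ → ι → ℤ) : (ι → A) →+ (κ → A) where
  toFun y k := ∑ i, w k i • y i
  map_zero' := by ext; simp
  map_add' y z := by ext; simp [Finset.sum_add_distrib]

@[simp]
theorem intMatrixHom_apply (w : κ → ι → ℤ) (y : ι → A) (k : κ) :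
    intMatrixHom w y k = ∑ i, w k i • y i :=
  rfl

theorem continuous_intMatrixHom [TopologicalSpace A] [IsTopologicalAddGroup A]
    (w : κ → ι → ℤ) : Continuous (intMatrixHom (A := A) w) :=
  continuous_pi fun k => continuous_finsetSum _ fun i _ => (continuous_apply i).zsmul (w k i)

theorem intMatrixHom_surjective [DivisibleBy A ℤ] {w : κ → ι → ℤ}
    (hw : LinearIndependent ℤ w) : Function.Surjective (intMatrixHom (A := A) w) := by
  classical
  intro z
  -- Divisible groups are injective: a homomorphism prescribed on the free subgroup spanned by the
  -- rows extends to `ℤ^ι`.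
  obtain ⟨g, hg⟩ := (Module.Baer.of_divisible A).extension_property
    (Finsupp.linearCombination ℤ w) hw (Finsupp.linearCombination ℤ z)
  refine ⟨fun i => g (Pi.single i 1), funext fun k => ?_⟩
  calc ∑ i, w k i • g (Pi.single i 1)
      = g (w k) := by simp [← map_zsmul, ← map_sum, ← Pi.single_smul, Finset.univ_sum_single]
    _ = z k := by simpa using LinearMap.congr_fun hg (Finsupp.single k 1)

end Torus

section Average

theorem average_fintype_prod_eq_prod {𝕜 κ : Type*} [RCLike 𝕜] [Fintype κ] {X : κ → Type*}
    [∀ k, MeasurableSpace (X k)] (μ : ∀ k, Measure (X k)) [∀ k, SigmaFinite (μ k)]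
    (f : ∀ k, X k → 𝕜) :
    ⨍ x, ∏ k, f k (x k) ∂Measure.pi μ = ∏ k, ⨍ x, f k x ∂μ k := by
  simp_rw [average_eq, integral_fintype_prod_eq_prod, measureReal_def, Measure.pi_univ,
    ENNReal.toReal_prod, RCLike.real_smul_eq_coe_mul, Finset.prod_mul_distrib]
  simp

variable {E : Type*} [NormedAddCommGroup E] [NormedSpace ℝ E]

theorem average_comp_of_measurePreserving {X Y : Type*} [MeasurableSpace X] [MeasurableSpace Y]
    {μ : Measure X} {ν : Measure Y} {f : X → Y} (hf : MeasurePreserving f μ ν) {g : Y → E}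
    (hg : AEStronglyMeasurable g ν) : ⨍ x, g (f x) ∂μ = ⨍ y, g y ∂ν := by
  rw [← hf.map_eq] at hg ⊢
  rw [average_eq, average_eq, integral_map hf.aemeasurable hg,
    map_measureReal_apply hf.measurable .univ, Set.preimage_univ]

theorem average_comp_of_surjective_addMonoidHom {G H : Type*}
    [AddGroup G] [TopologicalSpace G] [IsTopologicalAddGroup G] [CompactSpace G]
    [MeasurableSpace G] [BorelSpace G] {μ : Measure G} [μ.IsAddHaarMeasure]
    [AddGroup H] [TopologicalSpace H] [IsTopologicalAddGroup H] [CompactSpace H]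
    [MeasurableSpace H] [BorelSpace H] {ν : Measure H} [ν.IsAddHaarMeasure]
    {f : G →+ H} (hf : Continuous f) (hsurj : Function.Surjective f) {g : H → E}
    (hg : AEStronglyMeasurable g ν) : ⨍ x, g (f x) ∂μ = ⨍ y, g y ∂ν := by
  have hμ : ((μ .univ)⁻¹ • μ).IsAddHaarMeasure := .smul μ (by simp) (by simp [NeZero.ne])
  have hν : ((ν .univ)⁻¹ • ν).IsAddHaarMeasure := .smul ν (by simp) (by simp [NeZero.ne])
  have hpres : MeasurePreserving f ((μ .univ)⁻¹ • μ) ((ν .univ)⁻¹ • ν) :=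
    f.measurePreserving hf hsurj (by rw [measure_univ, measure_univ])
  rw [average_eq', average_eq', ← hpres.map_eq, integral_map hpres.aemeasurable]
  rw [hpres.map_eq]
  exact hg.smul_measure _

end Average

section Box

variable {ι κ 𝕜 : Type*} [Fintype ι] [RCLike 𝕜] {T : ℝ}

theorem intMatrixHom_coe (w : κ → ι → ℤ) (x : ι → ℝ) (k : κ) :
    intMatrixHom w (fun i => (x i : AddCircle T)) k = (∑ i, (w k i : ℝ) * x i : ℝ) := by
  simp only [intMatrixHom_apply, ← zsmul_eq_mul, QuotientAddGroup.mk_sum, AddCircle.coe_zsmul]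

variable [hT : Fact (0 < T)]

theorem average_torus_prod_comp_intMatrixHom [Fintype κ] {w : κ → ι → ℤ}
    (hw : LinearIndependent ℤ w) {f : κ → AddCircle T → 𝕜} (hf : ∀ k, Continuous (f k)) :
    ⨍ y : ι → AddCircle T, ∏ k, f k (intMatrixHom w y k) = ∏ k, ⨍ s, f k s := by
  have hprod : Continuous fun z : κ → AddCircle T => ∏ k, f k (z k) := by fun_prop
  rw [average_comp_of_surjective_addMonoidHom (ν := volume) (continuous_intMatrixHom w)
    (intMatrixHom_surjective hw) hprod.aestronglyMeasurable]
  exact average_fintype_prod_eq_prod _ f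

variable (T) in
theorem measurePreserving_box_torus (a : ι → ℝ) :
    MeasurePreserving (fun (x : ι → ℝ) i => (x i : AddCircle T))
      (volume.restrict (Set.Icc a (fun i => a i + T))) volume := by
  have hbox : volume.restrict (Set.Icc a (fun i => a i + T)) =
      Measure.pi fun i => volume.restrict (Set.Ioc (a i) (a i + T)) := by
    rw [← Measure.restrict_pi_pi, volume_pi]
    exact (Measure.restrict_congr_set Measure.univ_pi_Ioc_ae_eq_Icc).symm
  rw [hbox]
  exact measurePreserving_pi _ _ fun i => AddCircle.measurePreserving_mk T (a i)

theorem intervalAverage_eq_average_addCircle {E : Type*} [NormedAddCommGroup E] [NormedSpace ℝ E]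
    (t : ℝ) (f : AddCircle T → E) :
    ⨍ s in t..t + T, f s = ⨍ s, f s := by
  rw [interval_average_eq, AddCircle.intervalIntegral_preimage, average_eq, measureReal_def,
    AddCircle.measure_univ]
  simp [hT.out.le]

theorem average_box_prod_ridge [Fintype κ] {w : κ → ι → ℤ} (hw : LinearIndependent ℤ w)
    {φ : κ → ℝ → 𝕜} (hφ : ∀ k, Continuous (φ k)) (hper : ∀ k, Function.Periodic (φ k) T)
    (a : ι → ℝ) (t : ℝ) :
    ⨍ x in Set.Icc a (fun i => a i + T), ∏ k, φ k (∑ i, (w k i : ℝ) * x i) =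
      ∏ k, ⨍ s in t..t + T, φ k s := by
  have hlift k : Continuous (hper k).lift := continuous_coinduced_dom.mpr (hφ k)
  calc ⨍ x in Set.Icc a (fun i => a i + T), ∏ k, φ k (∑ i, (w k i : ℝ) * x i)
      = ⨍ x in Set.Icc a (fun i => a i + T),
          ∏ k, (hper k).lift (intMatrixHom w (fun i => (x i : AddCircle T)) k) := by
        simp_rw [intMatrixHom_coe, Function.Periodic.lift_coe]
    _ = ⨍ y : ι → AddCircle T, ∏ k, (hper k).lift (intMatrixHom w y k) := by
        refine average_comp_of_measurePreserving (measurePreserving_box_torus T a)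
          (g := fun y => ∏ k, (hper k).lift (intMatrixHom w y k))
          (Continuous.aestronglyMeasurable ?_)
        have := continuous_intMatrixHom (A := AddCircle T) w
        fun_prop
    _ = ∏ k, ⨍ s, (hper k).lift s := average_torus_prod_comp_intMatrixHom hw hlift
    _ = ∏ k, ⨍ s in t..t + T, φ k s := by
        simp_rw [← intervalAverage_eq_average_addCircle t, Function.Periodic.lift_coe]

end Box

theorem linearIndependent_pair_of_smul_ne_smul {R M : Type*} [Ring R] [IsDomain R]
    [AddCommGroup M] [Module R M] [Module.IsTorsionFree R M] {w w' : M} (hw : w ≠ 0)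
    (hw' : w' ≠ 0) (hineq : ∀ k l : R, k ≠ 0 → l ≠ 0 → k • w ≠ l • w') :
    LinearIndependent R ![w, w'] := by
  refine LinearIndependent.pair_iff.mpr fun k l h => ?_
  have hl : l = 0 := by
    by_contra hl
    have hk : k ≠ 0 := by
      rintro rfl
      simp [hl, hw'] at h
    exact hineq k (-l) hk (neg_ne_zero.mpr hl) (by rw [neg_smul, eq_neg_of_add_eq_zero_left h])
  subst hl
  simpa [hw] using h

/-- `ℋ(w)`: the variant of `ridgeSpace' m w` without the mean-zero condition. -/
noncomputable def ridgeSpace (m : ℕ) (w : Fin m → ℤ) :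
    Submodule ℂ (Lp ℂ 2 (cubeMeasure m)) :=
  (Submodule.span ℂ
    {F : Lp ℂ 2 (cubeMeasure m) | ∃ φ : ℝ → ℂ, Continuous φ ∧ Function.Periodic φ 2 ∧
      ⇑F =ᵐ[cubeMeasure m] fun x => φ (∑ i, (w i : ℝ) * x i)}).topologicalClosure

theorem ridgeSpace'_le_ridgeSpace (m : ℕ) (w : Fin m → ℤ) : ridgeSpace' m w ≤ ridgeSpace m w :=
  Submodule.topologicalClosure_mono <| Submodule.span_mono fun _ ⟨φ, hφ, hper, _, hF⟩ =>
    ⟨φ, hφ, hper, hF⟩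

theorem integral_cubeMeasure_ridge_mul_ridge_eq_zero {m : ℕ} {w w' : Fin m → ℤ}
    (hw : LinearIndependent ℤ ![w, w']) {φ ψ : ℝ → ℂ} (hφ : Continuous φ) (hψ : Continuous ψ)
    (hφper : Function.Periodic φ 2) (hψper : Function.Periodic ψ 2)
    (hψmean : ∫ s in (-1 : ℝ)..1, ψ s = 0) :
    ∫ x, φ (∑ i, (w i : ℝ) * x i) * ψ (∑ i, (w' i : ℝ) * x i) ∂cubeMeasure m = 0 := by
  have : Fact ((0 : ℝ) < 2) := ⟨two_pos⟩
  have havg := average_box_prod_ridge hw (φ := ![φ, ψ])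
    (Fin.forall_fin_two.mpr ⟨hφ, hψ⟩) (Fin.forall_fin_two.mpr ⟨hφper, hψper⟩) (-1) (-1)
  have hcorner : (fun i => (-1 : Fin m → ℝ) i + 2) = 1 := by ext; norm_num
  have hψavg : ⨍ s in (-1 : ℝ)..-1 + 2, ψ s = 0 := by
    rw [interval_average_eq]
    norm_num [hψmean]
  simp only [Fin.prod_univ_two, Matrix.cons_val_zero, Matrix.cons_val_one, hcorner, hψavg,
    mul_zero] at havg
  rw [cubeMeasure, ← measure_smul_setAverage _ isCompact_Icc.measure_ne_top, havg, smul_zero]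

theorem isOrtho_topologicalClosure_span {𝕜 E : Type*} [RCLike 𝕜] [NormedAddCommGroup E]
    [InnerProductSpace 𝕜 E] {s t : Set E} (h : ∀ x ∈ s, ∀ y ∈ t, inner 𝕜 x y = 0) :
    (Submodule.span 𝕜 s).topologicalClosure ⟂ (Submodule.span 𝕜 t).topologicalClosure := by
  rw [Submodule.isOrtho_iff_le, Submodule.orthogonal_closure]
  refine Submodule.topologicalClosure_minimal _ ?_ (Submodule.isClosed_orthogonal _)
  exact Submodule.isOrtho_span.mpr h

theorem stmt16_general {m : ℕ} {w w' : Fin m → ℤ} (hw : LinearIndependent ℤ ![w, w']) :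
    ridgeSpace m w ⟂ ridgeSpace' m w' := by
  refine isOrtho_topologicalClosure_span ?_
  rintro F ⟨φ, hφ, hφper, hF⟩ G ⟨ψ, hψ, hψper, hψmean, hG⟩
  calc inner ℂ F G
      = ∫ x, starRingEnd ℂ (φ (∑ i, (w i : ℝ) * x i)) * ψ (∑ i, (w' i : ℝ) * x i)
          ∂cubeMeasure m := by
        rw [L2.inner_def]
        refine integral_congr_ae ?_
        filter_upwards [hF, hG] with x hFx hGx
        rw [hFx, hGx, RCLike.inner_apply']
    _ = 0 := integral_cubeMeasure_ridge_mul_ridge_eq_zero hw (Complex.continuous_conj.comp hφ)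
        hψ (hφper.comp _) hψper hψmean

/-- for inequivalent `w, w' ∈ ℤ^m \ {0}`, the closed subspaces `ℋ'(w)` and
`ℋ'(w')` of `L²(J^m)` are mutually orthogonal. -/
theorem stmt16 {m : ℕ} (hm : 1 ≤ m) (w w' : Fin m → ℤ) (hw : w ≠ 0) (hw' : w' ≠ 0)
    (hineq : ∀ k l : ℤ, k ≠ 0 → l ≠ 0 → k • w ≠ l • w') :
    ∀ F ∈ ridgeSpace' m w, ∀ F' ∈ ridgeSpace' m w',
      @inner ℂ _ _ F F' = 0 :=
  fun _ hF _ hF' =>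
    (stmt16_general (linearIndependent_pair_of_smul_ne_smul hw hw' hineq)).inner_eq
      (ridgeSpace'_le_ridgeSpace m w hF) hF'
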